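/- For every integer l ≥ 6, the largest index j in {1, …, τ} at which d_l(j) = g_l(j) − h_l(j) is negative equals ⌊√l / 2⌋; that is, d_l(j) < 0 for 1 ≤ j ≤ ⌊√l/2⌋ and d_l(j) > 0 for ⌊√l/2⌋ < j ≤ τ, where τ = ⌊l/3⌋. -/

import Mathlib

/-- `h_l(j) = (l+j)/(l-j)` as a rational number. -/
def hFn (l j : ℕ) : ℚ := ((l : ℚ) + j) / ((l : ℚ) - j)

/-- `g_l(j) = ((l+j)^(2j))² / ((l+3j)^(2j) · (l−j)^(2j))` as a rational number, where
`x^(m)` denotes the descending factorial `x(x−1)⋯(x−m+1)`. -/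
def gFn (l j : ℕ) : ℚ :=
  ((Nat.descFactorial (l + j) (2 * j) : ℚ)) ^ 2 /
    ((Nat.descFactorial (l + 3 * j) (2 * j) : ℚ) * (Nat.descFactorial (l - j) (2 * j) : ℚ))

/-- `d_l(j) = g_l(j) − h_l(j)`. -/
def dFn (l j : ℕ) : ℚ := gFn l j - hFn l j

open Filter Topology

lemma aux_mono (q : ℕ → ℚ) (N : ℕ) (h : ∀ n, N ≤ n → q n ≤ q (n+1))
    (ht : Tendsto q atTop (𝓝 1)) (n : ℕ) (hn : N ≤ n) : q n ≤ 1 := by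
  have hm : Monotone (fun k => q (k + n)) :=
    monotone_nat_of_le_succ (fun k => by
      have := h (k + n) (by omega)
      rw [show k + 1 + n = k + n + 1 by ring]
      exact this)
  have := hm.ge_of_tendsto ((tendsto_add_atTop_iff_nat n).2 ht) 0
  simpa using this

lemma aux_anti (q : ℕ → ℚ) (N : ℕ) (h : ∀ n, N ≤ n → q (n+1) ≤ q n)
    (ht : Tendsto q atTop (𝓝 1)) (n : ℕ) (hn : N ≤ n) : 1 ≤ q n := by
  have hm : Antitone (fun k => q (k + n)) :=
    antitone_nat_of_succ_le (fun k => by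
      have := h (k + n) (by omega)
      rw [show k + 1 + n = k + n + 1 by ring]
      exact this)
  have := hm.le_of_tendsto ((tendsto_add_atTop_iff_nat n).2 ht) 0
  simpa using this

lemma aux_inv (c : ℚ) : Tendsto (fun l : ℕ => c / (l : ℚ)) atTop (𝓝 0) :=
  tendsto_const_nhds.div_atTop tendsto_natCast_atTop_atTop

lemma desc_lim (a k : ℕ) :
    Tendsto (fun l : ℕ => ((l + a).descFactorial k : ℚ) / (l : ℚ) ^ k) atTop (𝓝 1) := by
  induction k with
  | zero => simp
  | succ k ih =>
    have h1 : Tendsto (fun l : ℕ => (1 + ((a : ℚ) - k) / (l : ℚ))) atTop (𝓝 1) := by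
      simpa using (aux_inv ((a : ℚ) - k)).const_add 1
    have h2 := h1.mul ih
    rw [one_mul] at h2
    refine h2.congr' ?_
    filter_upwards [eventually_ge_atTop (k + 1)] with l hl
    have hl0 : (l : ℚ) ≠ 0 := by
      have : l ≠ 0 := by omega
      exact_mod_cast this
    rw [Nat.descFactorial_succ, Nat.cast_mul, Nat.cast_sub (by omega)]
    push_cast
    field_simp
    ring

lemma g_lim (j : ℕ) : Tendsto (fun l : ℕ => gFn l j) atTop (𝓝 1) := by
  rw [← tendsto_add_atTop_iff_nat j]
  have h := ((desc_lim (2*j) (2*j)).pow 2).div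
    ((desc_lim (4*j) (2*j)).mul (desc_lim 0 (2*j))) (by norm_num)
  norm_num at h
  refine h.congr' ?_
  filter_upwards [eventually_ge_atTop 1] with l hl
  have hl0 : (l : ℚ) ≠ 0 := by
    have : l ≠ 0 := by omega
    exact_mod_cast this
  unfold gFn
  rw [show l + j + j = l + 2*j by ring, show l + j + 3*j = l + 4*j by ring,
    show l + j - j = l by omega]
  simp only [Pi.div_apply, Pi.pow_apply, Pi.mul_apply]
  field_simp

lemma g_pos (l j : ℕ) (h : 3 * j ≤ l) : 0 < gFn l j := by
  unfold gFn
  have h1 : 0 < (l + j).descFactorial (2*j) := Nat.descFactorial_pos.2 (by omega)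
  have h2 : 0 < (l + 3*j).descFactorial (2*j) := Nat.descFactorial_pos.2 (by omega)
  have h3 : 0 < (l - j).descFactorial (2*j) := Nat.descFactorial_pos.2 (by omega)
  positivity

lemma desc_step (n k : ℕ) (h : k ≤ n) :
    ((n : ℚ) + 1 - k) * ((n + 1).descFactorial k : ℚ) = ((n : ℚ) + 1) * (n.descFactorial k : ℚ) := by
  have := Nat.succ_descFactorial n k
  have h2 : ((n + 1 - k : ℕ) : ℚ) = (n : ℚ) + 1 - k := by
    rw [Nat.cast_sub (by omega)]; push_cast; ring
  rw [← h2]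
  exact_mod_cast this

lemma g_step (l j : ℕ) (h : 3 * j ≤ l) (L : ℚ) (hL : L = (l : ℚ) + 1) :
    gFn (l+1) j * ((L - j)^3 * (L + 3*j)) = gFn l j * ((L + j)^3 * (L - 3*j)) := by
  unfold gFn
  have e1 := desc_step (l + j) (2*j) (by omega)
  have e2 := desc_step (l + 3*j) (2*j) (by omega)
  have e3 := desc_step (l - j) (2*j) (by omega)
  have h1 : 0 < (l + j).descFactorial (2*j) := Nat.descFactorial_pos.2 (by omega)
  have h2 : 0 < (l + 3*j).descFactorial (2*j) := Nat.descFactorial_pos.2 (by omega)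
  have h3 : 0 < (l - j).descFactorial (2*j) := Nat.descFactorial_pos.2 (by omega)
  have h2' : 0 < (l + 3*j + 1).descFactorial (2*j) := Nat.descFactorial_pos.2 (by omega)
  have h3' : 0 < (l - j + 1).descFactorial (2*j) := Nat.descFactorial_pos.2 (by omega)
  rw [show l + 1 + j = l + j + 1 by ring, show l + 1 + 3*j = l + 3*j + 1 by ring,
    show l + 1 - j = l - j + 1 by omega]
  rw [Nat.cast_sub (by omega)] at e3
  push_cast at e1 e2 e3
  have e1' : (L - j) * ((l + j + 1).descFactorial (2*j) : ℚ)
      = (L + j) * ((l + j).descFactorial (2*j) : ℚ) := by rw [hL]; linear_combination e1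
  have e2' : (L + j) * ((l + 3*j + 1).descFactorial (2*j) : ℚ)
      = (L + 3*j) * ((l + 3*j).descFactorial (2*j) : ℚ) := by rw [hL]; linear_combination e2
  have e3' : (L - 3*j) * ((l - j + 1).descFactorial (2*j) : ℚ)
      = (L - j) * ((l - j).descFactorial (2*j) : ℚ) := by rw [hL]; linear_combination e3
  clear e1 e2 e3
  have hh : (3 * j : ℚ) ≤ l := by exact_mod_cast h
  have hj : (0:ℚ) ≤ j := by positivity
  generalize ((l + j + 1).descFactorial (2*j)) = A' at *
  generalize ((l + j).descFactorial (2*j)) = A at *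
  generalize ((l + 3*j + 1).descFactorial (2*j)) = B' at *
  generalize ((l + 3*j).descFactorial (2*j)) = B at *
  generalize ((l - j + 1).descFactorial (2*j)) = C' at *
  generalize ((l - j).descFactorial (2*j)) = C at *
  have p1 : 0 < L - 3*j := by rw [hL]; linarith
  have p2 : 0 < L + j := by linarith
  have p3 : 0 < L - j := by linarith
  have q1 : (A' : ℚ) = (L + j) * A / (L - j) := by rw [eq_div_iff (by positivity)]; linarith
  have q2 : (B' : ℚ) = (L + 3*j) * B / (L + j) := by rw [eq_div_iff (by positivity)]; linarith
  have q3 : (C' : ℚ) = (L - j) * C / (L - 3*j) := by rw [eq_div_iff (by positivity)]; linarith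
  have p4 : 0 < L + 3*j := by linarith
  have p1' := p1.ne'
  have p4' := p4.ne'
  rw [q1, q2, q3]
  generalize L - 3*(j:ℚ) = X at *
  generalize L + 3*(j:ℚ) = Y at *
  field_simp

def GA (c : ℚ) (l j : ℕ) : ℚ :=
  ((l:ℚ)^2 + l + c * j^2 + 4 * j^3) / ((l:ℚ)^2 + l + c * j^2 - 4 * j^3)

lemma GA_lim (c : ℚ) (j : ℕ) : Tendsto (fun l : ℕ => GA c l j) atTop (𝓝 1) := by
  have h : ∀ d : ℚ, Tendsto (fun l : ℕ => 1 + 1 / (l:ℚ) + d / (l:ℚ) * (1 / (l:ℚ))) atTop (𝓝 1) := by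
    intro d
    simpa using ((aux_inv 1).const_add 1).add ((aux_inv d).mul (aux_inv 1))
  have := (h (c * j^2 + 4 * j^3)).div (h (c * j^2 - 4 * j^3)) (by norm_num)
  rw [div_one] at this
  refine this.congr' ?_
  filter_upwards [eventually_ge_atTop 1] with l hl
  have hl0 : (l : ℚ) ≠ 0 := by
    have : l ≠ 0 := by omega
    exact_mod_cast this
  unfold GA
  simp only [Pi.div_apply]
  rw [← mul_div_mul_left _ _ (pow_ne_zero 2 hl0)]
  congr 1 <;> field_simp <;> ring

lemma den_pos (c : ℚ) (hc : -3 ≤ c) (l j : ℕ) (hj : 1 ≤ j) (h : 4 * j^2 ≤ l + 1) :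
    0 < (l:ℚ)^2 + l + c * j^2 - 4 * j^3 := by
  have h' : (4 * j^2 : ℚ) ≤ l + 1 := by exact_mod_cast h
  have hj' : (1:ℚ) ≤ j := by exact_mod_cast hj
  have h1 : (4 * j^2 : ℚ) * (4 * j^2 - 1) ≤ (l+1) * l := by
    apply mul_le_mul h' (by linarith) (by nlinarith) (by positivity)
  have h2 : (j:ℚ)^2 ≤ j^3 := by nlinarith [sq_nonneg (j:ℚ)]
  have h3 : (j:ℚ)^3 ≤ j^4 := by nlinarith [pow_pos (lt_of_lt_of_le one_pos hj') 3]
  have h4 : (0:ℚ) < j^2 := by positivity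
  nlinarith

lemma tri (l j : ℕ) (hj : 1 ≤ j) (h : 4 * j^2 ≤ l + 1) : 3 * j ≤ l := by nlinarith

lemma upper (l j : ℕ) (hj : 1 ≤ j) (h : 4 * j^2 ≤ l) : gFn l j ≤ GA (-3) l j := by
  have key := aux_mono (fun n => gFn n j / GA (-3) n j) (4 * j^2) ?_ ?_ l h
  · have d := den_pos (-3) le_rfl l j hj (by omega)
    have : 0 < GA (-3) l j := by
      unfold GA
      refine div_pos ?_ d
      have : (0:ℚ) ≤ j^3 := by positivity
      linarith
    simpa using (div_le_one this).1 key
  · intro n hn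
    have ht := tri n j hj (by omega)
    have st := g_step n j ht _ rfl
    have d1 := den_pos (-3) le_rfl n j hj (by omega)
    have d2 := den_pos (-3) le_rfl (n+1) j hj (by omega)
    have gp := g_pos n j ht
    have hj' : (1:ℚ) ≤ j := by exact_mod_cast hj
    have hn' : (4 * j^2 : ℚ) ≤ n := by exact_mod_cast hn
    have ht' : (3 * j : ℚ) ≤ n := by exact_mod_cast ht
    have j3 : (0:ℚ) < j^3 := by positivity
    unfold GA
    push_cast at d2 ⊢
    generalize gFn (n+1) j = g' at *
    generalize gFn n j = g at *
    have n1 : 0 < (n:ℚ)^2 + n + -3 * j^2 + 4 * j^3 := by linarith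
    have n2 : 0 < ((n:ℚ)+1)^2 + (n+1) + -3 * j^2 + 4 * j^3 := by linarith
    have p1 : 0 < (n:ℚ) + 1 - 3*j := by linarith
    have p2 : 0 < (n:ℚ) + 1 - j := by linarith
    have q : g' = g * (((n:ℚ) + 1 + j)^3 * ((n:ℚ) + 1 - 3*j)) / (((n:ℚ) + 1 - j)^3 * ((n:ℚ) + 1 + 3*j)) := by
      field_simp; linarith
    rw [q, div_div_eq_mul_div, div_div_eq_mul_div, div_le_div_iff₀ n1 n2, div_mul_eq_mul_div,
      div_mul_eq_mul_div, le_div_iff₀ (by positivity)]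
    have sq : (16 * j^4 : ℚ) ≤ (n+1)^2 := by nlinarith [sq_nonneg (j:ℚ)]
    have k : 0 ≤ g * (16 * j^3 * (n+1) * (((n:ℚ)+1)^2 + 16 * j^6 - 12 * j^4)) := by
      have : 0 ≤ ((n:ℚ)+1)^2 + 16 * j^6 - 12 * j^4 := by
        have : (0:ℚ) ≤ j^4 := by positivity
        have : (0:ℚ) ≤ j^6 := by positivity
        linarith
      positivity
    linear_combination k
  · have := (g_lim j).div (GA_lim (-3) j) (by norm_num)
    rw [div_one] at this
    exact this

lemma lower (l j : ℕ) (hj : 1 ≤ j) (h : 4 * j^2 ≤ l + 1) : GA (-1) l j ≤ gFn l j := by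
  have key := aux_anti (fun n => gFn n j / GA (-1) n j) (4 * j^2 - 1) ?_ ?_ l (by omega)
  · have d := den_pos (-1) (by norm_num) l j hj (by omega)
    have : 0 < GA (-1) l j := by
      unfold GA
      refine div_pos ?_ d
      have : (0:ℚ) ≤ j^3 := by positivity
      linarith
    simpa using (one_le_div this).1 key
  · intro n hn
    have ht := tri n j hj (by omega)
    have st := g_step n j ht _ rfl
    have d1 := den_pos (-1) (by norm_num) n j hj (by omega)
    have d2 := den_pos (-1) (by norm_num) (n+1) j hj (by omega)
    have gp := g_pos n j ht
    have hj' : (1:ℚ) ≤ j := by exact_mod_cast hj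
    have hn2 : 4 * j^2 ≤ n + 1 := by omega
    have hn' : (4 * j^2 : ℚ) ≤ n + 1 := by exact_mod_cast hn2
    have ht' : (3 * j : ℚ) ≤ n := by exact_mod_cast ht
    have j3 : (0:ℚ) < j^3 := by positivity
    unfold GA
    push_cast at d2 ⊢
    generalize gFn (n+1) j = g' at *
    generalize gFn n j = g at *
    have n1 : 0 < (n:ℚ)^2 + n + -1 * j^2 + 4 * j^3 := by linarith
    have n2 : 0 < ((n:ℚ)+1)^2 + (n+1) + -1 * j^2 + 4 * j^3 := by linarith
    have p1 : 0 < (n:ℚ) + 1 - 3*j := by linarith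
    have p2 : 0 < (n:ℚ) + 1 - j := by linarith
    have q : g' = g * (((n:ℚ) + 1 + j)^3 * ((n:ℚ) + 1 - 3*j)) / (((n:ℚ) + 1 - j)^3 * ((n:ℚ) + 1 + 3*j)) := by
      field_simp; linarith
    rw [q, div_div_eq_mul_div, div_div_eq_mul_div, div_le_div_iff₀ n2 n1, div_mul_eq_mul_div,
      div_mul_eq_mul_div, div_le_iff₀ (by positivity)]
    have sq : (16 * j^4 : ℚ) ≤ (n+1)^2 := by nlinarith [sq_nonneg (j:ℚ)]
    have k : 0 ≤ g * (16 * j^3 * (n+1) * ((4 * j^2 - 1) * ((n:ℚ)+1)^2 + 4 * j^4 - 16 * j^6)) := by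
      have : 0 ≤ (4 * j^2 - 1) * ((n:ℚ)+1)^2 + 4 * j^4 - 16 * j^6 := by
        have a1 : (1:ℚ) ≤ j^2 := by nlinarith
        have a2 : (4 * j^2 - 1 : ℚ) * (16 * j^4) ≤ (4 * j^2 - 1) * (n+1)^2 :=
          mul_le_mul_of_nonneg_left sq (by linarith)
        have a3 : (0:ℚ) ≤ j^4 * (j^2 - 1) := mul_nonneg (by positivity) (by linarith)
        have a4 : (0:ℚ) ≤ j^4 := by positivity
        have a5 : (0:ℚ) ≤ j^6 := by positivity
        nlinarith
      positivity
    linear_combination k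
  · have := (g_lim j).div (GA_lim (-1) j) (by norm_num)
    rw [div_one] at this
    exact this

lemma neg_part (l j : ℕ) (hj : 1 ≤ j) (h : 4 * j^2 ≤ l) : dFn l j < 0 := by
  have u := upper l j hj h
  have d := den_pos (-3) le_rfl l j hj (by omega)
  have ht := tri l j hj (by omega)
  have hj' : (1:ℚ) ≤ j := by exact_mod_cast hj
  have hn' : (4 * j^2 : ℚ) ≤ l := by exact_mod_cast h
  have ht' : (3 * j : ℚ) ≤ l := by exact_mod_cast ht
  have : GA (-3) l j < hFn l j := by
    unfold GA hFn
    rw [div_lt_div_iff₀ d (by linarith)]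
    have a : 0 ≤ (l:ℚ) * (l - 4 * j^2) := mul_nonneg (by positivity) (by linarith)
    have b : (0:ℚ) < j^2 := by positivity
    have k : 0 < 2 * (j:ℚ) * (l * (l - 4 * j^2) + l - 3 * j^2) :=
      mul_pos (by linarith) (by linarith)
    linear_combination k
  unfold dFn
  linarith

/-- The ratio `g/h > 1`, i.e. positivity, propagates downwards. -/
lemma pos_down (l j : ℕ) (hj : 1 ≤ j) (h3 : 3 * j ≤ l) (h : l + 1 < 4 * j^2)
    (hp : 0 < dFn (l+1) j) : 0 < dFn l j := by
  have st := g_step l j h3 _ rfl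
  have gp := g_pos l j h3
  unfold dFn hFn at *
  have hj' : (1:ℚ) ≤ j := by exact_mod_cast hj
  have hn' : (l + 1 : ℚ) < 4 * j^2 := by exact_mod_cast h
  have ht' : (3 * j : ℚ) ≤ l := by exact_mod_cast h3
  push_cast at hp
  generalize gFn (l+1) j = g' at *
  generalize gFn l j = g at *
  have p1 : 0 < (l:ℚ) + 1 - 3*j := by linarith
  have p2 : 0 < (l:ℚ) + 1 - j := by linarith
  have p3 : 0 < (l:ℚ) - j := by linarith
  have q : g' = g * (((l:ℚ) + 1 + j)^3 * ((l:ℚ) + 1 - 3*j)) / (((l:ℚ) + 1 - j)^3 * ((l:ℚ) + 1 + 3*j)) := by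
    field_simp; linarith
  rw [q, sub_pos, div_lt_div_iff₀ p2 (by positivity)] at hp
  rw [sub_pos, div_lt_iff₀ p3]
  -- cancel the common factors
  have hp2 : ((l:ℚ) + 1 - j)^2 * (l + 1 + 3*j) < g * ((l + 1 + j)^2 * (l + 1 - 3*j)) := by
    have c : 0 < ((l:ℚ) + 1 + j) * (l + 1 - j) := by positivity
    refine lt_of_mul_lt_mul_left ?_ c.le
    linear_combination hp
  have k : ((l:ℚ) + 1 + j)^2 * (l + 1 - 3*j) * (l + j) ≤ (l + 1 - j)^2 * (l + 1 + 3*j) * (l - j) := by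
    have b : 0 ≤ ((l:ℚ) + 1) * (4 * j^2 - (l + 1)) := mul_nonneg (by positivity) (by linarith)
    have b2 : 0 ≤ (l:ℚ) * j^2 := by positivity
    have b3 : 0 ≤ (j:ℚ)^2 := by positivity
    have : 0 ≤ 2 * (j:ℚ) * (8 * (l+1) * j^2 - (l+1)^2 - 3 * j^2) :=
      mul_nonneg (by linarith) (by linarith)
    linear_combination this
  have c : 0 < ((l:ℚ) + 1 + j)^2 * (l + 1 - 3*j) := by positivity
  refine lt_of_mul_lt_mul_left ?_ c.le
  calc ((l:ℚ) + 1 + j)^2 * (l + 1 - 3*j) * (l + j) ≤ (l + 1 - j)^2 * (l + 1 + 3*j) * (l - j) := k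
    _ < g * ((l + 1 + j)^2 * (l + 1 - 3*j)) * (l - j) := mul_lt_mul_of_pos_right hp2 p3
    _ = _ := by ring

lemma pos_part (j : ℕ) (hj : 1 ≤ j) : ∀ m l : ℕ, l + 1 + m = 4 * j^2 → 3 * j ≤ l → 0 < dFn l j := by
  intro m
  induction m with
  | zero =>
    intro l h h3
    have u := lower l j hj (by omega)
    have d := den_pos (-1) (by norm_num) l j hj (by omega)
    have hj' : (1:ℚ) ≤ j := by exact_mod_cast hj
    have hn' : (l + 1 : ℚ) = 4 * j^2 := by exact_mod_cast h
    have ht' : (3 * j : ℚ) ≤ l := by exact_mod_cast h3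
    have : hFn l j < GA (-1) l j := by
      unfold GA hFn
      rw [div_lt_div_iff₀ (by linarith) d]
      have k : 0 < 2 * (j:ℚ) * j^2 := by positivity
      linear_combination k + 2 * l * j * hn'
    unfold dFn
    linarith
  | succ m ih =>
    intro l h h3
    exact pos_down l j hj h3 (by omega) (ih (l+1) (by omega) (by omega))

lemma floor_iff (l j : ℕ) : j ≤ ⌊Real.sqrt l / 2⌋₊ ↔ 4 * j^2 ≤ l := by
  rw [Nat.le_floor_iff (by positivity), le_div_iff₀ (two_pos : (0:ℝ) < 2), Real.le_sqrt (by positivity)]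
  rw [show ((j:ℝ) * 2)^2 = ((4 * j^2 : ℕ) : ℝ) by push_cast; ring]
  · exact Nat.cast_le
  · positivity

theorem stmt14 (l : ℕ) (hl : 6 ≤ l) :
    (∀ j : ℕ, 1 ≤ j → j ≤ ⌊Real.sqrt l / 2⌋₊ → dFn l j < 0) ∧
    (∀ j : ℕ, ⌊Real.sqrt l / 2⌋₊ < j → j ≤ l / 3 → 0 < dFn l j) := by
  refine ⟨fun j hj h => neg_part l j hj ((floor_iff l j).1 h), fun j h h3 => ?_⟩
  have h4 : ¬ 4 * j^2 ≤ l := fun hh => absurd ((floor_iff l j).2 hh) (by omega)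
  exact pos_part j (by omega) (4 * j^2 - (l + 1)) l (by omega) (by omega)
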